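/- Let F : ℝⁿ → ℝ ∪ {+∞} be an ℝ-DDM-convex function and let f be its restriction to ℤⁿ. If F has a unique minimizer x̄ over ℝⁿ, then there exists a minimizer x* of f over ℤⁿ with ‖x* − x̄‖_∞ ≤ n. -/

import Mathlib

open Finset

/-- Directed midpoint `μ(x,y)`: round `(xᵢ+yᵢ)/2` towards `xᵢ`, componentwise:
`μ(x,y)ᵢ = ⌈(xᵢ+yᵢ)/2⌉` if `xᵢ ≥ yᵢ`, and `μ(x,y)ᵢ = ⌊(xᵢ+yᵢ)/2⌋` if `xᵢ < yᵢ`. -/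
def dmu {n : ℕ} (x y : Fin n → ℤ) : Fin n → ℤ := fun i =>
  if y i ≤ x i then ⌈((x i + y i : ℤ) : ℚ) / 2⌉ else ⌊((x i + y i : ℤ) : ℚ) / 2⌋

/-- The ℓ∞-norm of an integer vector, as a natural number. -/
def normInf {n : ℕ} (z : Fin n → ℤ) : ℕ := Finset.univ.sup fun i => (z i).natAbs

/-- A function `f : ℤⁿ → ℝ ∪ {+∞}` is DDM-convex if
`f(x) + f(y) ≥ f(μ(x,y)) + f(μ(y,x))` for all `x, y ∈ ℤⁿ`. -/
def DDMConvexFn {n : ℕ} (f : (Fin n → ℤ) → EReal) : Prop :=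
  ∀ x y : Fin n → ℤ, f (dmu x y) + f (dmu y x) ≤ f x + f y

/-- `F : ℝⁿ → ℝ ∪ {+∞}` is convex (in the extended-real-valued sense). -/
def ERealConvexOn {n : ℕ} (F : (Fin n → ℝ) → EReal) : Prop :=
  ∀ x y : Fin n → ℝ, ∀ a b : ℝ, 0 ≤ a → 0 ≤ b → a + b = 1 →
    F (a • x + b • y) ≤ (a : EReal) * F x + (b : EReal) * F y

/-- A continuous convex function `F : ℝⁿ → ℝ ∪ {+∞}` is ℝ-DDM-convex if for every
positive integer `α` the function `f^{1/α}(x) = F(x/α)` on `ℤⁿ` is DDM-convex. -/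
def RDDMConvex {n : ℕ} (F : (Fin n → ℝ) → EReal) : Prop :=
  Continuous F ∧ ERealConvexOn F ∧
    ∀ α : ℕ, 0 < α →
      DDMConvexFn (fun x : Fin n → ℤ => F (fun i => (x i : ℝ) / (α : ℝ)))


lemma dmu_apply_eq {n : ℕ} (x y : Fin n → ℤ) (i : Fin n) :
    dmu x y i = if y i ≤ x i then (x i + y i + 1) / 2 else (x i + y i) / 2 := by
  unfold dmu
  split_ifs with h
  · rw [Int.ceil_eq_iff]
    have h1 : 2 * ((x i + y i + 1) / 2) ≤ x i + y i + 1 := by omega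
    have h2 : x i + y i ≤ 2 * ((x i + y i + 1) / 2) := by omega
    have h1' : (2:ℚ) * (((x i + y i + 1) / 2 : ℤ) : ℚ) ≤ ((x i + y i : ℤ) : ℚ) + 1 := by
      exact_mod_cast h1
    have h2' : ((x i + y i : ℤ) : ℚ) ≤ (2:ℚ) * (((x i + y i + 1) / 2 : ℤ) : ℚ) := by
      exact_mod_cast h2
    constructor <;> linarith
  · rw [Int.floor_eq_iff]
    have h1 : 2 * ((x i + y i) / 2) ≤ x i + y i := by omega
    have h2 : x i + y i + 1 ≤ 2 * ((x i + y i) / 2) + 2 := by omega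
    have h1' : (2:ℚ) * (((x i + y i) / 2 : ℤ) : ℚ) ≤ ((x i + y i : ℤ) : ℚ) := by
      exact_mod_cast h1
    have h2' : ((x i + y i : ℤ) : ℚ) + 1 ≤ (2:ℚ) * (((x i + y i) / 2 : ℤ) : ℚ) + 2 := by
      exact_mod_cast h2
    constructor <;> linarith

/-- Layered vector. -/
def layerVec {n : ℕ} (Y : Fin n → ℤ) (J : Finset ℕ) : Fin n → ℤ := fun i =>
  (Y i).sign * ((J.filter (fun k => k ≤ (Y i).natAbs)).card : ℤ)

lemma exists_half (K : Finset ℕ) : ∃ O ⊆ K, O.card = K.card / 2 ∧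
    ∀ t : ℕ, (O.filter (fun k => k ≤ t)).card = (K.filter (fun k => k ≤ t)).card / 2 := by
  induction K using Finset.induction_on_max with
  | empty => exact ⟨∅, by simp, by simp, by simp⟩
  | insert a K ha ih =>
    obtain ⟨O, hO, hc, ht⟩ := ih
    have haK : a ∉ K := fun h => lt_irrefl _ (ha a h)
    have haO : a ∉ O := fun h => haK (hO h)
    have hall : ∀ t, a ≤ t → K.filter (fun k => k ≤ t) = K := fun t hat =>
      Finset.filter_true_of_mem fun x hx => (ha x hx).le.trans hat
    have hallO : ∀ t, a ≤ t → O.filter (fun k => k ≤ t) = O := fun t hat =>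
      Finset.filter_true_of_mem fun x hx => (ha x (hO hx)).le.trans hat
    by_cases hp : K.card % 2 = 1
    · refine ⟨insert a O, Finset.insert_subset_insert _ hO, ?_, ?_⟩
      · rw [Finset.card_insert_of_notMem haO, Finset.card_insert_of_notMem haK]; omega
      · intro t
        by_cases hat : a ≤ t
        · rw [Finset.filter_insert, Finset.filter_insert, if_pos hat, if_pos hat, hall t hat,
            hallO t hat, Finset.card_insert_of_notMem haO, Finset.card_insert_of_notMem haK]
          omega
        · rw [Finset.filter_insert, Finset.filter_insert, if_neg hat, if_neg hat]
          exact ht t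
    · refine ⟨O, hO.trans (Finset.subset_insert _ _), ?_, ?_⟩
      · rw [Finset.card_insert_of_notMem haK]; omega
      · intro t
        by_cases hat : a ≤ t
        · rw [Finset.filter_insert, if_pos hat, hall t hat,
            hallO t hat, Finset.card_insert_of_notMem haK]
          omega
        · rw [Finset.filter_insert, if_neg hat]
          exact ht t

lemma layerVec_union {n : ℕ} (Y : Fin n → ℤ) {J K : Finset ℕ} (h : Disjoint J K) :
    layerVec Y (J ∪ K) = layerVec Y J + layerVec Y K := by
  funext i
  simp only [layerVec, Pi.add_apply]
  rw [Finset.filter_union, Finset.card_union_of_disjoint (Finset.disjoint_filter_filter h)]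
  push_cast; ring

lemma half_ineq {n : ℕ} {g : (Fin n → ℤ) → EReal} (hg : DDMConvexFn g) (x Y : Fin n → ℤ)
    (J K : Finset ℕ) (hJK : Disjoint J K) : ∃ O ⊆ K, O.card = K.card / 2 ∧
    g (x + layerVec Y (J ∪ O)) + g (x + layerVec Y (J ∪ (K \ O))) ≤
      g (x + layerVec Y J) + g (x + layerVec Y (J ∪ K)) := by
  obtain ⟨O, hO, hc, ht⟩ := exists_half K
  refine ⟨O, hO, hc, ?_⟩
  have hKO : layerVec Y K = layerVec Y O + layerVec Y (K \ O) := by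
    rw [← layerVec_union Y Finset.disjoint_sdiff, Finset.union_sdiff_of_subset hO]
  have h1 := layerVec_union Y hJK
  have h2 := layerVec_union Y (hJK.mono_right hO)
  have h3 := layerVec_union Y (hJK.mono_right (Finset.sdiff_subset (s := K) (t := O)))
  have key := hg (x + layerVec Y J) (x + layerVec Y (J ∪ K))
  have e1 : dmu (x + layerVec Y J) (x + layerVec Y (J ∪ K)) = x + layerVec Y (J ∪ O) := by
    rw [h1, h2]
    funext i
    rw [dmu_apply_eq]
    simp only [Pi.add_apply]
    have hk : layerVec Y K i = (Y i).sign * ((K.filter (fun k => k ≤ (Y i).natAbs)).card : ℤ) := rfl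
    have ho : layerVec Y O i =
        (Y i).sign * (((K.filter (fun k => k ≤ (Y i).natAbs)).card / 2 : ℕ) : ℤ) := by
      rw [← ht]; rfl
    generalize (K.filter (fun k => k ≤ (Y i).natAbs)).card = c at hk ho
    generalize layerVec Y J i = j
    generalize layerVec Y K i = k at hk ⊢
    generalize layerVec Y O i = o at ho ⊢
    rcases lt_trichotomy (Y i) 0 with hs | hs | hs
    · rw [Int.sign_eq_neg_one_of_neg hs] at hk ho; split_ifs <;> omega
    · rw [hs] at hk ho; simp only [Int.sign_zero, zero_mul] at hk ho; split_ifs <;> omega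
    · rw [Int.sign_eq_one_of_pos hs] at hk ho; split_ifs <;> omega
  have e2 : dmu (x + layerVec Y (J ∪ K)) (x + layerVec Y J) = x + layerVec Y (J ∪ (K \ O)) := by
    rw [h1, h3, eq_sub_of_add_eq' hKO.symm]
    funext i
    rw [dmu_apply_eq]
    simp only [Pi.add_apply, Pi.sub_apply]
    have hk : layerVec Y K i = (Y i).sign * ((K.filter (fun k => k ≤ (Y i).natAbs)).card : ℤ) := rfl
    have ho : layerVec Y O i =
        (Y i).sign * (((K.filter (fun k => k ≤ (Y i).natAbs)).card / 2 : ℕ) : ℤ) := by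
      rw [← ht]; rfl
    generalize (K.filter (fun k => k ≤ (Y i).natAbs)).card = c at hk ho
    generalize layerVec Y J i = j
    generalize layerVec Y K i = k at hk ⊢
    generalize layerVec Y O i = o at ho ⊢
    rcases lt_trichotomy (Y i) 0 with hs | hs | hs
    · rw [Int.sign_eq_neg_one_of_neg hs] at hk ho; split_ifs <;> omega
    · rw [hs] at hk ho; simp only [Int.sign_zero, zero_mul] at hk ho; split_ifs <;> omega
    · rw [Int.sign_eq_one_of_pos hs] at hk ho; split_ifs <;> omega
  rw [e1, e2] at key
  exact key

/-- Abstract splitting property. -/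
def SplitProp (h : Finset ℕ → EReal) : Prop :=
  ∀ J K : Finset ℕ, Disjoint J K → ∃ O ⊆ K, O.card = K.card / 2 ∧
    h (J ∪ O) + h (J ∪ (K \ O)) ≤ h J + h (J ∪ K)

lemma ne_top_of_add_le {a b c d : EReal} (ha : a ≠ ⊥) (hb : b ≠ ⊥)
    (hc : c ≠ ⊤) (hd : d ≠ ⊤) (h : a + b ≤ c + d) : a ≠ ⊤ ∧ b ≠ ⊤ := by
  have hlt : a + b < ⊤ := h.trans_lt (EReal.add_lt_top hc hd)
  constructor
  · rintro rfl
    rw [EReal.top_add_of_ne_bot hb] at hlt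
    exact lt_irrefl _ hlt
  · rintro rfl
    rw [EReal.add_top_of_ne_bot ha] at hlt
    exact lt_irrefl _ hlt

lemma split_finite {h : Finset ℕ → EReal} (hb : ∀ J, h J ≠ ⊥) (hs : SplitProp h) :
    ∀ m : ℕ, ∀ J K : Finset ℕ, Disjoint J K → K.card = m → h J ≠ ⊤ → h (J ∪ K) ≠ ⊤ →
      ∀ S ⊆ K, h (J ∪ S) ≠ ⊤ := by
  intro m
  induction m using Nat.strong_induction_on with
  | _ m ih =>
  intro J K hJK hm hJ hJK' S hS
  by_cases hS0 : S = ∅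
  · subst hS0; simpa using hJ
  by_cases hSK : S = K
  · subst hSK; exact hJK'
  obtain ⟨O, hO, hc, hle⟩ := hs J K hJK
  obtain ⟨f1, f2⟩ := ne_top_of_add_le (hb _) (hb _) hJ hJK' hle
  have hss : S ⊂ K := Finset.ssubset_iff_subset_ne.2 ⟨hS, hSK⟩
  have c1 : S.card < K.card := Finset.card_lt_card hss
  have c0 : 0 < S.card := Finset.card_pos.2 (Finset.nonempty_iff_ne_empty.2 hS0)
  by_cases hSE : S = K \ O
  · subst hSE; exact f2
  have a1 : h (J ∪ (S ∩ O)) ≠ ⊤ :=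
    ih O.card (by omega) J O (hJK.mono_right hO) rfl hJ f1 _ Finset.inter_subset_right
  have cE : (K \ O).card = K.card - O.card := Finset.card_sdiff_of_subset hO
  have a2 : h ((J ∪ O) ∪ (S \ O)) ≠ ⊤ := by
    refine ih (K \ O).card (by omega) (J ∪ O) (K \ O) ?_ rfl f1 ?_ _
      (Finset.sdiff_subset_sdiff hS le_rfl)
    · rw [Finset.disjoint_union_left]
      exact ⟨hJK.mono_right Finset.sdiff_subset, Finset.disjoint_sdiff⟩
    · rw [Finset.union_assoc, Finset.union_sdiff_of_subset hO]; exact hJK'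
  have e1 : J ∪ S = (J ∪ (S ∩ O)) ∪ (S \ O) := by
    ext k; simp only [Finset.mem_union, Finset.mem_inter, Finset.mem_sdiff]; tauto
  have e2 : (J ∪ O) ∪ (S \ O) = (J ∪ (S ∩ O)) ∪ ((O \ S) ∪ (S \ O)) := by
    ext k; simp only [Finset.mem_union, Finset.mem_inter, Finset.mem_sdiff]; tauto
  rw [e2] at a2
  rw [e1]
  have sub : (O \ S) ∪ (S \ O) ⊆ K :=
    Finset.union_subset (Finset.sdiff_subset.trans hO) (Finset.sdiff_subset.trans hS)
  have hne : (O \ S) ∪ (S \ O) ≠ K := by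
    intro heq
    apply hSE
    ext k
    have h1 : k ∈ (O \ S) ∪ (S \ O) ↔ k ∈ K := by rw [heq]
    have h2 := @hO k
    have h3 := @hS k
    simp only [Finset.mem_union, Finset.mem_sdiff] at h1 ⊢
    tauto
  refine ih ((O \ S) ∪ (S \ O)).card ?_ _ _ ?_ rfl a1 a2 _ Finset.subset_union_right
  · rw [← hm]; exact Finset.card_lt_card (Finset.ssubset_iff_subset_ne.2 ⟨sub, hne⟩)
  · rw [Finset.disjoint_left]
    intro k hk hk'
    have h2 := @hO k
    have h3 := @hS k
    have h4 := fun hk : k ∈ J => Finset.disjoint_left.1 hJK hk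
    simp only [Finset.mem_union, Finset.mem_inter, Finset.mem_sdiff] at hk hk'
    tauto

lemma supermod_real {U : Finset ℕ} (r : Finset ℕ → ℝ)
    (hr : ∀ J ⊆ U, ∀ a ∈ U, ∀ b ∈ U, a ∉ J → b ∉ J → a ≠ b →
      r (insert a J) + r (insert b J) ≤ r J + r (insert a (insert b J))) :
    ∀ B ⊆ U, ∀ A ⊆ U, Disjoint A B → r A + r B ≤ r ∅ + r (A ∪ B) := by
  -- one element against a set
  have one : ∀ b ∈ U, ∀ J ⊆ U, b ∉ J → ∀ A ⊆ U, Disjoint J A → b ∉ A →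
      r (J ∪ A) + r (insert b J) ≤ r J + r (insert b (J ∪ A)) := by
    intro b hbU J hJ hbJ A
    induction A using Finset.induction_on with
    | empty => intro _ _ _; simp
    | insert a A haA ih =>
      intro hA hd hbA
      rw [Finset.insert_subset_iff] at hA
      rw [Finset.disjoint_insert_right] at hd
      rw [Finset.mem_insert, not_or] at hbA
      have h1 := ih hA.2 hd.2 hbA.2
      have h2 := hr (J ∪ A) (Finset.union_subset hJ hA.2) a hA.1 b hbU
        (by simp [hd.1, haA]) (by simp [hbJ, hbA.2]) (Ne.symm hbA.1)
      rw [Finset.union_insert, Finset.insert_comm b a]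
      linarith
  intro B
  induction B using Finset.induction_on with
  | empty => intro _ A _ _; simp [add_comm]
  | insert b B hbB ih =>
    intro hB A hA hd
    rw [Finset.insert_subset_iff] at hB
    rw [Finset.disjoint_insert_right] at hd
    have h1 := ih hB.2 A hA hd.2
    have h2 := one b hB.1 B hB.2 hbB A hA hd.2.symm hd.1
    rw [Finset.union_insert, Finset.union_comm A B] 
    rw [Finset.union_comm A B] at h1
    linarith

lemma split_supermod {h : Finset ℕ → EReal} (hb : ∀ J, h J ≠ ⊥) (hs : SplitProp h)
    (U S : Finset ℕ) (hS : S ⊆ U) : h S + h (U \ S) ≤ h ∅ + h U := by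
  by_cases h0 : h ∅ = ⊤
  · rw [h0, EReal.top_add_of_ne_bot (hb _)]; exact le_top
  by_cases hU : h U = ⊤
  · rw [hU, EReal.add_top_of_ne_bot (hb _)]; exact le_top
  have fin : ∀ J ⊆ U, h J ≠ ⊤ := by
    intro J hJ
    have := split_finite hb hs U.card ∅ U (Finset.disjoint_empty_left _) rfl h0 (by simpa using hU)
      J hJ
    simpa using this
  have coe : ∀ J ⊆ U, h J = ((h J).toReal : EReal) := fun J hJ =>
    (EReal.coe_toReal (fin J hJ) (hb J)).symm
  have main := supermod_real (U := U) (fun J => (h J).toReal) (by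
    intro J hJ a ha b hbU haJ hbJ hab
    obtain ⟨O, hO, hc, hle⟩ := hs J {a, b} (by simp [haJ, hbJ])
    rw [Finset.card_pair hab] at hc
    obtain ⟨k, rfl⟩ := Finset.card_eq_one.1 (show O.card = 1 by omega)
    have hk : k = a ∨ k = b := by simpa using hO
    have i1 : insert a J ⊆ U := Finset.insert_subset ha hJ
    have i2 : insert b J ⊆ U := Finset.insert_subset hbU hJ
    have i3 : insert a (insert b J) ⊆ U := Finset.insert_subset ha i2
    have e0 : J ∪ {a, b} = insert a (insert b J) := by
      ext; simp only [Finset.mem_union, Finset.mem_insert, Finset.mem_singleton]; tauto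
    have hle' : h (insert a J) + h (insert b J) ≤ h J + h (insert a (insert b J)) := by
      rw [e0] at hle
      rcases hk with rfl | rfl
      · have e1 : J ∪ {k} = insert k J := by ext; simp
        have e2 : J ∪ ({k, b} \ {k}) = insert b J := by
          ext z; simp only [Finset.mem_union, Finset.mem_insert, Finset.mem_singleton,
            Finset.mem_sdiff]
          constructor
          · tauto
          · rintro (rfl | hz)
            · exact Or.inr ⟨Or.inr rfl, Ne.symm hab⟩
            · exact Or.inl hz
        rwa [e1, e2] at hle
      · have e1 : J ∪ {k} = insert k J := by ext; simp
        have e2 : J ∪ ({a, k} \ {k}) = insert a J := by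
          ext z; simp only [Finset.mem_union, Finset.mem_insert, Finset.mem_singleton,
            Finset.mem_sdiff]
          constructor
          · tauto
          · rintro (rfl | hz)
            · exact Or.inr ⟨Or.inl rfl, hab⟩
            · exact Or.inl hz
        rw [e1, e2] at hle
        rwa [add_comm] 
    rw [coe _ i1, coe _ i2, coe _ i3, coe _ hJ] at hle'
    exact_mod_cast hle')
  have := main (U \ S) Finset.sdiff_subset S hS Finset.disjoint_sdiff
  rw [Finset.union_sdiff_of_subset hS] at this
  rw [coe S hS, coe (U \ S) Finset.sdiff_subset, coe ∅ (Finset.empty_subset _), coe U le_rfl]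
  exact_mod_cast this

lemma parallelogram {n : ℕ} {g : (Fin n → ℤ) → EReal} (hb : ∀ x, g x ≠ ⊥)
    (hg : DDMConvexFn g) (x Y D : Fin n → ℤ) (T N : ℕ)
    (hD : ∀ i, ((Y i).natAbs ≤ T ∧ D i = 0) ∨ (T + N ≤ (Y i).natAbs ∧ D i = (Y i).sign * N)) :
    g (x + D) + g (x + (Y - D)) ≤ g x + g (x + Y) := by
  have hs : SplitProp (fun J => g (x + layerVec Y J)) := fun J K h => half_ineq hg x Y J K h
  obtain ⟨m, hm⟩ : ∃ m, ∀ i, (Y i).natAbs ≤ m :=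
    ⟨Finset.univ.sup fun i => (Y i).natAbs, fun i => Finset.le_sup (f := fun i => (Y i).natAbs)
      (Finset.mem_univ i)⟩
  have hS : Finset.Ioc T (T + N) ⊆ Finset.Ioc 0 (m + T + N) := by
    intro k; simp only [Finset.mem_Ioc]; omega
  have key := split_supermod (fun J => hb _) hs (Finset.Ioc 0 (m + T + N)) _ hS
  have eU : layerVec Y (Finset.Ioc 0 (m + T + N)) = Y := by
    funext i
    have : (Finset.Ioc 0 (m + T + N)).filter (fun k => k ≤ (Y i).natAbs)
        = Finset.Ioc 0 (Y i).natAbs := by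
      ext k; simp only [Finset.mem_filter, Finset.mem_Ioc]; have := hm i; omega
    simp only [layerVec, this, Nat.card_Ioc, Nat.sub_zero]
    rw [Int.sign_mul_natAbs]
  have eS : layerVec Y (Finset.Ioc T (T + N)) = D := by
    funext i
    rcases hD i with ⟨h1, h2⟩ | ⟨h1, h2⟩
    · have : (Finset.Ioc T (T + N)).filter (fun k => k ≤ (Y i).natAbs) = ∅ := by
        ext k; simp only [Finset.mem_filter, Finset.mem_Ioc, Finset.notMem_empty, iff_false]; omega
      simp only [layerVec, this, h2]; simp
    · have : (Finset.Ioc T (T + N)).filter (fun k => k ≤ (Y i).natAbs) = Finset.Ioc T (T + N) := by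
        ext k; simp only [Finset.mem_filter, Finset.mem_Ioc]; omega
      simp only [layerVec, this, h2, Nat.card_Ioc]; simp
  have e0 : layerVec Y ∅ = 0 := by funext i; simp [layerVec]
  have ed : layerVec Y (Finset.Ioc 0 (m + T + N) \ Finset.Ioc T (T + N)) = Y - D := by
    have := layerVec_union Y (Finset.disjoint_sdiff (s := Finset.Ioc T (T + N))
      (t := Finset.Ioc 0 (m + T + N)))
    rw [Finset.union_sdiff_of_subset hS, eU, eS] at this
    exact (sub_eq_of_eq_add' this).symm
  simp only [eU, eS, e0, ed, add_zero] at key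
  exact key

lemma exists_gap {n : ℕ} (y : Fin n → ℝ) (hy : ¬ ‖y‖ ≤ (n : ℝ)) :
    ∃ t t' : ℝ, 0 ≤ t ∧ t + 1 < t' ∧ (∀ i, |y i| ≤ t ∨ t' ≤ |y i|) ∧ ∃ i, t' ≤ |y i| := by
  rw [pi_norm_le_iff_of_nonneg (by positivity)] at hy
  push Not at hy
  obtain ⟨i0, hi0⟩ := hy
  rw [Real.norm_eq_abs] at hi0
  have hn : 0 < n := Fin.pos i0
  have hn' : (0:ℝ) < n := by exact_mod_cast hn
  set δ : ℝ := |y i0| / n with hδ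
  have hδ1 : 1 < δ := by rw [hδ, lt_div_iff₀ hn']; linarith
  have hδ0 : 0 < δ := by linarith
  have hnδ : (n:ℝ) * δ = |y i0| := by rw [hδ]; field_simp
  obtain ⟨k, hk, hkn⟩ : ∃ k ∈ Finset.range n,
      k ∉ (Finset.univ.erase i0).image (fun i => ⌊|y i| / δ⌋₊) := by
    by_contra hcon
    push Not at hcon
    have h1 := Finset.card_le_card (show Finset.range n ⊆ _ from hcon)
    have h2 := Finset.card_image_le (s := Finset.univ.erase i0) (f := fun i => ⌊|y i| / δ⌋₊)
    rw [Finset.card_range] at h1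
    rw [Finset.card_erase_of_mem (Finset.mem_univ _), Finset.card_univ, Fintype.card_fin] at h2
    omega
  rw [Finset.mem_range] at hk
  have hk1 : ((k:ℝ) + 1) * δ ≤ |y i0| := by
    rw [← hnδ]
    have : (k:ℝ) + 1 ≤ n := by exact_mod_cast hk
    exact mul_le_mul_of_nonneg_right this hδ0.le
  refine ⟨k * δ, (k + 1) * δ, by positivity, by linarith, ?_, i0, hk1⟩
  intro i
  by_cases hi : i = i0
  · subst hi; exact Or.inr hk1
  have hne : ⌊|y i| / δ⌋₊ ≠ k := by
    intro h
    exact hkn (Finset.mem_image.2 ⟨i, by simp [hi], h⟩)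
  rcases lt_or_gt_of_ne hne with h | h
  · left
    have := (Nat.floor_lt (by positivity)).1 h
    rw [div_lt_iff₀ hδ0] at this
    exact this.le
  · right
    have h' : k + 1 ≤ ⌊|y i| / δ⌋₊ := h
    have := (Nat.le_floor_iff (by positivity)).1 h'
    rw [le_div_iff₀ hδ0] at this
    push_cast at this
    exact this

lemma level_bounded {n : ℕ} (F : (Fin n → ℝ) → EReal) (hbot : ∀ x, F x ≠ ⊥)
    (hcont : Continuous F) (hconv : ERealConvexOn F)
    (xbar : Fin n → ℝ) (hmin : ∀ z : Fin n → ℝ, F xbar ≤ F z)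
    (huniq : ∀ z : Fin n → ℝ, (∀ w : Fin n → ℝ, F z ≤ F w) → z = xbar)
    (c : ℝ) : ∃ R : ℝ, ∀ z, F z ≤ (c : EReal) → ‖z - xbar‖ ≤ R := by
  by_cases hx : F xbar = ⊤
  · refine ⟨0, fun z hz => ?_⟩
    have := hmin z
    rw [hx] at this
    exact absurd (this.trans hz) (not_le.2 (EReal.coe_lt_top c))
  obtain ⟨m0, hm0⟩ : ∃ m0 : ℝ, F xbar = m0 := ⟨_, (EReal.coe_toReal hx (hbot _)).symm⟩
  have hcomp : IsCompact (Metric.sphere xbar 1) := isCompact_sphere _ _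
  by_cases hne : (Metric.sphere xbar 1).Nonempty
  · obtain ⟨w0, hw0, hw⟩ := hcomp.exists_isMinOn hne hcont.continuousOn
    have hlt : F xbar < F w0 := by
      refine lt_of_le_of_ne (hmin _) fun h => ?_
      have := huniq w0 (fun w => h ▸ hmin w)
      rw [this] at hw0
      simp at hw0
    obtain ⟨m1, h1, h2⟩ := EReal.lt_iff_exists_real_btwn.1 hlt
    rw [hm0, EReal.coe_lt_coe_iff] at h1
    refine ⟨max 1 ((c - m0) / (m1 - m0)), fun z hz => ?_⟩
    by_cases hr : ‖z - xbar‖ ≤ 1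
    · exact hr.trans (le_max_left _ _)
    push Not at hr
    refine le_trans ?_ (le_max_right _ _)
    set r := ‖z - xbar‖ with hrdef
    have hr0 : 0 < r := by linarith
    have hzt : F z ≠ ⊤ := (hz.trans_lt (EReal.coe_lt_top c)).ne
    obtain ⟨v, hv⟩ : ∃ v : ℝ, F z = v := ⟨_, (EReal.coe_toReal hzt (hbot _)).symm⟩
    have hinv : 1 / r ≤ 1 := by rw [div_le_one hr0]; exact hr.le
    have hc := hconv xbar z (1 - 1 / r) (1 / r) (by linarith) (by positivity) (by ring)
    have hmem : (1 - 1 / r) • xbar + (1 / r) • z ∈ Metric.sphere xbar 1 := by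
      rw [mem_sphere_iff_norm]
      have : (1 - 1 / r) • xbar + (1 / r) • z - xbar = (1 / r) • (z - xbar) := by module
      rw [this, norm_smul, ← hrdef, Real.norm_of_nonneg (by positivity)]
      field_simp
    have h3 := h2.le.trans ((hw hmem).trans hc)
    rw [hm0, hv] at h3
    have h3' : m1 ≤ (1 - 1 / r) * m0 + (1 / r) * v := by exact_mod_cast h3
    rw [hv, EReal.coe_le_coe_iff] at hz
    rw [le_div_iff₀ (by linarith)]
    have h4 : r * m1 ≤ r * ((1 - 1 / r) * m0 + (1 / r) * v) :=
      mul_le_mul_of_nonneg_left h3' hr0.le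
    have h5 : r * ((1 - 1 / r) * m0 + (1 / r) * v) = (r - 1) * m0 + v := by field_simp
    nlinarith
  · refine ⟨0, fun z hz => ?_⟩
    by_contra hcon
    push Not at hcon
    apply hne
    refine ⟨xbar + (1 / ‖z - xbar‖) • (z - xbar), ?_⟩
    rw [mem_sphere_iff_norm, add_sub_cancel_left, norm_smul, Real.norm_of_nonneg (by positivity)]
    field_simp

lemma int_ball_finite {n : ℕ} (xbar : Fin n → ℝ) (R : ℝ) :
    {z : Fin n → ℤ | ‖(fun i => (z i : ℝ)) - xbar‖ ≤ R}.Finite := by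
  refine (Set.finite_Icc (fun i => ⌊xbar i - R⌋) (fun i => ⌈xbar i + R⌉)).subset ?_
  intro z hz
  have hz' : ∀ i, |(z i : ℝ) - xbar i| ≤ R := fun i =>
    (norm_le_pi_norm ((fun i => (z i : ℝ)) - xbar) i).trans hz
  constructor
  · intro i
    have h := abs_le.1 (hz' i)
    have h2 := Int.floor_le (xbar i - R)
    have : (⌊xbar i - R⌋ : ℝ) ≤ z i := by linarith
    exact_mod_cast this
  · intro i
    have h := abs_le.1 (hz' i)
    have h2 := Int.le_ceil (xbar i + R)
    have : (z i : ℝ) ≤ ⌈xbar i + R⌉ := by linarith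
    exact_mod_cast this

lemma proximity_of_min {n : ℕ}
    (F : (Fin n → ℝ) → EReal) (hbot : ∀ x, F x ≠ ⊥) (hF : RDDMConvex F)
    (xbar : Fin n → ℝ) (hmin : ∀ z : Fin n → ℝ, F xbar ≤ F z)
    (huniq : ∀ z : Fin n → ℝ, (∀ w : Fin n → ℝ, F z ≤ F w) → z = xbar)
    (xs : Fin n → ℤ) (hfin : F (fun i => (xs i : ℝ)) ≠ ⊤)
    (hxs : ∀ z : Fin n → ℤ, F (fun i => (xs i : ℝ)) ≤ F (fun i => (z i : ℝ))) :
    ‖(fun i => (xs i : ℝ)) - xbar‖ ≤ (n : ℝ) := by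
  obtain ⟨hcont, hconv, hddm⟩ := hF
  rw [norm_sub_rev]
  by_contra hcon
  obtain ⟨t, t', ht0, htt, hgap, i1, hi1⟩ := exists_gap _ hcon
  set y : Fin n → ℝ := xbar - (fun i => (xs i : ℝ)) with hy
  -- the direction
  let d : Fin n → ℤ := fun i => if t' ≤ |y i| then (if 0 < y i then 1 else -1) else 0
  have hd1 : d i1 ≠ 0 := by
    simp only [d, if_pos hi1]; split_ifs <;> norm_num
  -- approximants
  let p : ℕ → Fin n → ℝ := fun α i => (xs i : ℝ) + (round ((α : ℝ) * y i) : ℝ) / α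
  have hround : ∀ u : ℝ, |((round u : ℤ) : ℝ) - u| ≤ 1 := fun u => by
    rw [abs_sub_comm]; exact (abs_sub_round u).trans (by norm_num)
  have hp : Filter.Tendsto p Filter.atTop (nhds xbar) := by
    rw [tendsto_pi_nhds]
    intro i
    have h0 : Filter.Tendsto (fun α : ℕ => (1 : ℝ) / α) Filter.atTop (nhds 0) :=
      tendsto_one_div_atTop_nhds_zero_nat
    rw [tendsto_iff_dist_tendsto_zero]
    refine squeeze_zero' (Filter.Eventually.of_forall fun _ => dist_nonneg) ?_ h0
    filter_upwards [Filter.eventually_gt_atTop 0] with α hα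
    have hα' : (0:ℝ) < α := by exact_mod_cast hα
    have : p α i - xbar i = ((round ((α : ℝ) * y i) : ℝ) - α * y i) / α := by
      have : xbar i = xs i + y i := by simp [hy]
      simp only [p, this]; field_simp; ring
    rw [Real.dist_eq, this, abs_div, abs_of_pos hα']
    exact div_le_div_of_nonneg_right (hround _) hα'.le
  have hstep : ∀ᶠ α : ℕ in Filter.atTop, F (fun i => p α i - (d i : ℝ)) ≤ F (p α) := by
    obtain ⟨N0, hN0⟩ := exists_nat_gt (3 / (t' - t - 1))
    filter_upwards [Filter.eventually_ge_atTop (max N0 2)] with α hα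
    have hα2 : 2 ≤ α := (le_max_right _ _).trans hα
    have hα2' : (2:ℝ) ≤ α := by exact_mod_cast hα2
    have hαpos : (0:ℝ) < α := by linarith
    have hαN : (N0 : ℝ) ≤ α := by exact_mod_cast (le_max_left _ _).trans hα
    have h3 : 3 < α * (t' - t - 1) := by
      rw [div_lt_iff₀ (by linarith)] at hN0
      exact hN0.trans_le (mul_le_mul_of_nonneg_right hαN (by linarith))
    let Y : Fin n → ℤ := fun i => round ((α : ℝ) * y i)
    let D : Fin n → ℤ := fun i => (α : ℤ) * d i
    let x : Fin n → ℤ := fun i => (α : ℤ) * xs i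
    have hT1 : α * t ≤ (⌈α * t⌉₊ : ℝ) := Nat.le_ceil _
    have hT2 : (⌈α * t⌉₊ : ℝ) < α * t + 1 := Nat.ceil_lt_add_one (by positivity)
    have hYabs : ∀ i, (((Y i).natAbs : ℕ) : ℝ) = |(Y i : ℝ)| := fun i => by
      rw [Nat.cast_natAbs, Int.cast_abs]
    have key := parallelogram (g := fun x : Fin n → ℤ => F (fun i => (x i : ℝ) / (α : ℝ)))
      (fun _ => hbot _) (hddm α (by omega)) x Y D (⌈α * t⌉₊ + 1) α (by
        intro i
        have hr := abs_le.1 (hround (α * y i))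
        by_cases hti : t' ≤ |y i|
        · right
          have hbig : α * t + 3 + α ≤ α * |y i| := by
            have := mul_le_mul_of_nonneg_left hti hαpos.le
            nlinarith
          have hαt : 0 ≤ α * t := by positivity
          by_cases hpos : 0 < y i
          · rw [abs_of_pos hpos] at hbig
            have hYpos : (0:ℝ) < Y i := by simp only [Y]; linarith
            have hYpos' : 0 < Y i := by exact_mod_cast hYpos
            constructor
            · have : ((⌈α * t⌉₊ + 1 + α : ℕ) : ℝ) ≤ ((Y i).natAbs : ℕ) := by
                rw [hYabs, abs_of_pos hYpos]; push_cast; simp only [Y]; linarith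
              exact_mod_cast this
            · rw [Int.sign_eq_one_of_pos hYpos']
              simp [D, d, hti, hpos]
          · rw [abs_of_nonpos (not_lt.1 hpos)] at hbig
            have hYpos : (Y i : ℝ) < 0 := by simp only [Y]; linarith
            have hYpos' : Y i < 0 := by exact_mod_cast hYpos
            constructor
            · have : ((⌈α * t⌉₊ + 1 + α : ℕ) : ℝ) ≤ ((Y i).natAbs : ℕ) := by
                rw [hYabs, abs_of_neg hYpos]; push_cast; simp only [Y]; linarith
              exact_mod_cast this
            · rw [Int.sign_eq_neg_one_of_neg hYpos']
              simp [D, d, hti, hpos]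
        · left
          have hle : |y i| ≤ t := (hgap i).resolve_right hti
          constructor
          · have : ((Y i).natAbs : ℝ) ≤ ((⌈α * t⌉₊ + 1 : ℕ) : ℝ) := by
              rw [hYabs]
              have h1 := abs_le.1 hle
              have h2 := mul_le_mul_of_nonneg_left h1.1 hαpos.le
              have h4 := mul_le_mul_of_nonneg_left h1.2 hαpos.le
              rw [abs_le]; push_cast; simp only [Y]
              constructor <;> linarith
            exact_mod_cast this
          · simp [D, d, hti])
    have e1 : (fun i => ((x + D) i : ℝ) / (α : ℝ)) = fun i => ((xs i + d i : ℤ) : ℝ) := by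
      funext i; simp only [Pi.add_apply, x, D]; push_cast; field_simp
    have e2 : (fun i => ((x + (Y - D)) i : ℝ) / (α : ℝ)) = fun i => p α i - (d i : ℝ) := by
      funext i; simp only [Pi.add_apply, Pi.sub_apply, x, D, p, Y]; push_cast; field_simp; ring
    have e3 : (fun i => (x i : ℝ) / (α : ℝ)) = fun i => (xs i : ℝ) := by
      funext i; simp only [x]; push_cast; field_simp
    have e4 : (fun i => ((x + Y) i : ℝ) / (α : ℝ)) = p α := by
      funext i; simp only [Pi.add_apply, x, p, Y]; push_cast; field_simp
    simp only [e1, e2, e3, e4] at key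
    have h5 := hxs (fun i => xs i + d i)
    have h6 : F (fun i => (xs i : ℝ)) + F (fun i => p α i - (d i : ℝ)) ≤
        F (fun i => (xs i : ℝ)) + F (p α) := (add_le_add_left h5 _).trans key
    obtain ⟨v, hv⟩ : ∃ v : ℝ, F (fun i => (xs i : ℝ)) = v :=
      ⟨_, (EReal.coe_toReal hfin (hbot _)).symm⟩
    rw [hv] at h6
    have h7 := add_le_add_right h6 ((-v : ℝ) : EReal)
    rwa [← add_assoc, ← add_assoc, ← EReal.coe_add, neg_add_cancel, EReal.coe_zero, zero_add,
      zero_add] at h7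
  have hlim1 : Filter.Tendsto (fun α => F (p α)) Filter.atTop (nhds (F xbar)) :=
    (hcont.tendsto _).comp hp
  have hlim2 : Filter.Tendsto (fun α => F (fun i => p α i - (d i : ℝ))) Filter.atTop
      (nhds (F (xbar - fun i => (d i : ℝ)))) :=
    (hcont.tendsto _).comp (hp.sub_const (fun i => (d i : ℝ)))
  have hle := le_of_tendsto_of_tendsto hlim2 hlim1 hstep
  have heq := huniq _ (fun w => hle.trans (hmin w))
  have := congrFun heq i1
  simp only [Pi.sub_apply, sub_eq_self] at this
  exact hd1 (by exact_mod_cast this)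

/-- For an ℝ-DDM-convex `F` with restriction `f` to `ℤⁿ`: if `F` has a unique
minimizer `x̄` over `ℝⁿ`, then `f` has a minimizer `x*` over `ℤⁿ` with
`‖x* - x̄‖_∞ ≤ n`. -/
theorem rddmConvex_proximity_continuous_to_discrete {n : ℕ}
    (F : (Fin n → ℝ) → EReal) (hbot : ∀ x, F x ≠ ⊥) (hF : RDDMConvex F)
    (xbar : Fin n → ℝ) (hmin : ∀ z : Fin n → ℝ, F xbar ≤ F z)
    (huniq : ∀ z : Fin n → ℝ, (∀ w : Fin n → ℝ, F z ≤ F w) → z = xbar) :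
    ∃ xstar : Fin n → ℤ,
      (∀ z : Fin n → ℤ, F (fun i => (xstar i : ℝ)) ≤ F (fun i => (z i : ℝ))) ∧
      ‖(fun i => (xstar i : ℝ)) - xbar‖ ≤ (n : ℝ) := by
  by_cases hall : ∀ z : Fin n → ℤ, F (fun i => (z i : ℝ)) = ⊤
  · refine ⟨fun i => round (xbar i), fun z => by rw [hall z]; exact le_top, ?_⟩
    rw [pi_norm_le_iff_of_nonneg (by positivity)]
    intro i
    have hn : (1:ℝ) ≤ n := by exact_mod_cast Fin.pos i
    have := abs_sub_round (xbar i)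
    rw [Pi.sub_apply, norm_sub_rev, Real.norm_eq_abs]
    linarith
  · push Not at hall
    obtain ⟨z0, hz0⟩ := hall
    obtain ⟨c, hc⟩ : ∃ c : ℝ, F (fun i => (z0 i : ℝ)) = c :=
      ⟨_, (EReal.coe_toReal hz0 (hbot _)).symm⟩
    obtain ⟨R, hR⟩ := level_bounded F hbot hF.1 hF.2.1 xbar hmin huniq c
    obtain ⟨xs, hxs, hxmin⟩ := Set.exists_min_image _ (fun z : Fin n → ℤ => F (fun i => (z i : ℝ)))
      (int_ball_finite xbar R) ⟨z0, hR _ hc.le⟩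
    have h0 := hxmin z0 (hR _ hc.le)
    have hm : ∀ z : Fin n → ℤ, F (fun i => (xs i : ℝ)) ≤ F (fun i => (z i : ℝ)) := by
      intro z
      by_cases hz : F (fun i => (z i : ℝ)) ≤ c
      · exact hxmin z (hR _ hz)
      · exact (h0.trans hc.le).trans (not_le.1 hz).le
    refine ⟨xs, hm, proximity_of_min F hbot hF xbar hmin huniq xs ?_ hm⟩
    exact (h0.trans_lt (by simp only [hc]; exact EReal.coe_lt_top c)).ne
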